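/- arXiv:1912.04383 — 3 statements merged into one kernel-verified Lean document; each statement's English description precedes it below -/
import Mathlib

section
/- Let k ≥ 1 and let F₁, …, F_k be nonempty finite subsets of ℝⁿ, and let e₁, …, e_k denote the standard basis of ℝᵏ. Let C ⊆ ℝⁿ × ℝᵏ be the Cayley polytope, i.e. the convex hull of the union over j = 1, …, k of the sets {(v, e_j) : v ∈ F_j}, and let F = convexHull(F₁) + ⋯ + convexHull(F_k) be the Minkowski sum of the convex hulls. Then the intersection of C with the affine slice ℝⁿ × {(1/k, …, 1/k)} equals the set {((1/k)·v, (1/k, …, 1/k)) : v ∈ F}; moreover the map v ↦ ((1/k)·v, (1/k, …, 1/k)) is a bijection from F onto this intersection. -/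
open Pointwise

/-!
A point of the Cayley polytope is a convex combination of points `(v, e_j)` with `v ∈ F j`.
Grouping the terms by `j` rewrites it as `∑ j, w j • (y j, e_j) = (∑ j, w j • y j, w)` with
`y j ∈ convexHull (F j)`, so the height of the point is its vector of weights. The fibre over a
height `w` with no zero entry is therefore the weighted Minkowski sum `∑ j, w j • convexHull (F j)`,
and constant weights can be pulled out of the sum.
-/

section CayleyTrick

theorem sum_smul_mk_single {R M ι : Type*} [Semiring R] [AddCommMonoid M] [Module R M] [Fintype ι]
    [DecidableEq ι] (w : ι → R) (y : ι → M) :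
    ∑ i, w i • (y i, (Pi.single i 1 : ι → R)) = (∑ i, w i • y i, w) := by
  ext
  · simp only [Prod.fst_sum, Prod.smul_fst]
  · simp only [Prod.snd_sum, Prod.smul_snd, ← pi_eq_sum_univ']

variable {𝕜 E ι : Type*} [Field 𝕜] [LinearOrder 𝕜] [IsStrictOrderedRing 𝕜]
  [AddCommGroup E] [Module 𝕜 E] [Fintype ι]

theorem sum_smul_centerMass_of_nonneg {κ : Type*} {t : Finset κ} {u : κ → 𝕜} {v : κ → E}
    (hu : ∀ a ∈ t, 0 ≤ u a) : (∑ a ∈ t, u a) • t.centerMass u v = ∑ a ∈ t, u a • v a := by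
  by_cases hsum : ∑ a ∈ t, u a = 0
  · have hu_zero : ∀ a ∈ t, u a = 0 := (Finset.sum_eq_zero_iff_of_nonneg hu).1 hsum
    rw [hsum, zero_smul, Finset.sum_eq_zero fun a ha => by rw [hu_zero a ha, zero_smul]]
  · exact smul_inv_smul₀ hsum _

-- Points of zero weight are left unconstrained, so that some of the sets may be empty.
theorem mem_convexHull_iUnion_iff {s : ι → Set E} {x : E} :
    x ∈ convexHull 𝕜 (⋃ i, s i) ↔ ∃ w ∈ stdSimplex 𝕜 ι, ∃ y : ι → E,
      (∀ i, w i ≠ 0 → y i ∈ convexHull 𝕜 (s i)) ∧ ∑ i, w i • y i = x := by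
  classical
  constructor
  · intro hx
    obtain ⟨κ, _, u, v, hu0, hu1, hv, rfl⟩ := mem_convexHull_iff_exists_fintype.1 hx
    choose c hc using fun a => Set.mem_iUnion.1 (hv a)
    let fibre (i : ι) : Finset κ := {a | c a = i}
    have hw0 (i : ι) : 0 ≤ ∑ a ∈ fibre i, u a := Finset.sum_nonneg fun a _ => hu0 a
    refine ⟨fun i => ∑ a ∈ fibre i, u a, ⟨hw0, ?_⟩,
      fun i => (fibre i).centerMass u v, fun i hi => ?_, ?_⟩
    · exact (Finset.sum_fiberwise _ c u).trans hu1
    · refine Finset.centerMass_mem_convexHull _ (fun a _ => hu0 a) ((hw0 i).lt_of_ne' hi) ?_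
      intro a ha
      exact (Finset.mem_filter.1 ha).2 ▸ hc a
    · rw [Finset.sum_congr rfl fun i _ => sum_smul_centerMass_of_nonneg fun a _ => hu0 a]
      exact Finset.sum_fiberwise _ c _
  · rintro ⟨w, ⟨hw0, hw1⟩, y, hy, rfl⟩
    rw [← finsum_eq_sum_of_fintype] at hw1 ⊢
    exact (convex_convexHull 𝕜 _).finsum_mem hw0 hw1 fun i hi =>
      convexHull_mono (Set.subset_iUnion s i) (hy i hi)

variable [DecidableEq ι]

variable (𝕜) in
/-- The Cayley polytope of a family of sets: the convex hull of copies of them placed at the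
vertices `Pi.single i 1` of the standard simplex. The sets need not be finite or convex; since the
convex hull is taken at the end, each may be replaced by its convex hull. -/
def cayleyPolytope (s : ι → Set E) : Set (E × (ι → 𝕜)) :=
  convexHull 𝕜 (⋃ i, (fun v => (v, Pi.single i (1 : 𝕜))) '' s i)

theorem mem_convexHull_image_mk_iff {F : Type*} [AddCommGroup F] [Module 𝕜 F] {s : Set E} {b : F}
    {p : E × F} : p ∈ convexHull 𝕜 ((fun v => (v, b)) '' s) ↔ p.1 ∈ convexHull 𝕜 s ∧ p.2 = b := by
  rw [← Set.prod_singleton, convexHull_prod, convexHull_singleton, Set.mem_prod,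
    Set.mem_singleton_iff]

theorem mk_mem_cayleyPolytope_iff {s : ι → Set E} {x : E} {w : ι → 𝕜} :
    (x, w) ∈ cayleyPolytope 𝕜 s ↔ w ∈ stdSimplex 𝕜 ι ∧ ∃ y : ι → E,
      (∀ i, w i ≠ 0 → y i ∈ convexHull 𝕜 (s i)) ∧ ∑ i, w i • y i = x := by
  simp only [cayleyPolytope, mem_convexHull_iUnion_iff, mem_convexHull_image_mk_iff]
  constructor
  · rintro ⟨u, hu, z, hz, hsum⟩
    have hz_sum : ∑ i, u i • z i = (∑ i, u i • (z i).1, u) := by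
      rw [← sum_smul_mk_single]
      refine Finset.sum_congr rfl fun i _ => ?_
      by_cases hi : u i = 0
      · rw [hi, zero_smul, zero_smul]
      · rw [← (hz i hi).2]
    obtain ⟨rfl, rfl⟩ := Prod.mk.inj (hz_sum.symm.trans hsum)
    exact ⟨hu, fun i => (z i).1, fun i hi => (hz i hi).1, rfl⟩
  · rintro ⟨hw, y, hy, rfl⟩
    exact ⟨w, hw, fun i => (y i, Pi.single i 1), fun i hi => ⟨hy i hi, rfl⟩,
      sum_smul_mk_single w y⟩

theorem mk_mem_cayleyPolytope_iff_mem_sum {s : ι → Set E} {x : E} {w : ι → 𝕜}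
    (hw : w ∈ stdSimplex 𝕜 ι) (hw0 : ∀ i, w i ≠ 0) :
    (x, w) ∈ cayleyPolytope 𝕜 s ↔ x ∈ ∑ i, w i • convexHull 𝕜 (s i) := by
  rw [mk_mem_cayleyPolytope_iff, and_iff_right hw, Set.mem_fintype_sum]
  constructor
  · rintro ⟨y, hy, rfl⟩
    exact ⟨fun i => w i • y i, fun i => Set.smul_mem_smul_set (hy i (hw0 i)), rfl⟩
  · rintro ⟨z, hz, rfl⟩
    choose y hy hyz using hz
    exact ⟨y, fun i _ => hy i, Finset.sum_congr rfl fun i _ => hyz i⟩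

theorem cayley_slice_general [Nonempty ι] (s : ι → Set E) :
    Set.BijOn (fun v : E => ((Fintype.card ι : 𝕜)⁻¹ • v, fun _ : ι => (Fintype.card ι : 𝕜)⁻¹))
      (∑ i, convexHull 𝕜 (s i))
      (cayleyPolytope 𝕜 s ∩ {p | p.2 = fun _ => (Fintype.card ι : 𝕜)⁻¹}) := by
  have hcard : (Fintype.card ι : 𝕜) ≠ 0 := Nat.cast_ne_zero.2 Fintype.card_ne_zero
  have hw : (fun _ : ι => (Fintype.card ι : 𝕜)⁻¹) ∈ stdSimplex 𝕜 ι :=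
    ⟨fun _ => by positivity, by simp [hcard]⟩
  have mem_iff (x : E) : (x, fun _ : ι => (Fintype.card ι : 𝕜)⁻¹) ∈ cayleyPolytope 𝕜 s ↔
      (Fintype.card ι : 𝕜) • x ∈ ∑ i, convexHull 𝕜 (s i) := by
    rw [mk_mem_cayleyPolytope_iff_mem_sum hw fun _ => inv_ne_zero hcard, ← Finset.smul_sum,
      Set.mem_inv_smul_set_iff₀ hcard]
  refine Set.InvOn.bijOn (f' := fun p => (Fintype.card ι : 𝕜) • p.1) ⟨?_, ?_⟩ ?_ ?_
  · exact fun v _ => smul_inv_smul₀ hcard v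
  · rintro ⟨x, _⟩ ⟨-, rfl⟩
    exact Prod.ext (inv_smul_smul₀ hcard x) rfl
  · exact fun v hv => ⟨(mem_iff _).2 ((smul_inv_smul₀ hcard v).symm ▸ hv), rfl⟩
  · rintro ⟨x, _⟩ ⟨hx, rfl⟩
    exact (mem_iff x).1 hx

end CayleyTrick

/-- The slice of the Cayley polytope of `F₁, …, F_k` at height `(1/k, …, 1/k)` is the
image of the Minkowski sum `F = convexHull F₁ + ⋯ + convexHull F_k` under the map
`v ↦ ((1/k) • v, (1/k, …, 1/k))`, and this map is a bijection from `F` onto the slice. -/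
theorem cayley_slice (n k : ℕ) (hk : 1 ≤ k) (F : Fin k → Set (Fin n → ℝ))
    (hfin : ∀ j, (F j).Finite) (hne : ∀ j, (F j).Nonempty)
    (C : Set ((Fin n → ℝ) × (Fin k → ℝ)))
    (hC : C = convexHull ℝ (⋃ j : Fin k, (fun v => (v, Pi.single j (1 : ℝ))) '' F j))
    (Fsum : Set (Fin n → ℝ))
    (hFsum : Fsum = ∑ j : Fin k, convexHull ℝ (F j))
    (slice : Set ((Fin n → ℝ) × (Fin k → ℝ)))
    (hslice : slice = {p | p.2 = fun _ : Fin k => (k : ℝ)⁻¹}) :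
    C ∩ slice = (fun v : Fin n → ℝ => (((k : ℝ)⁻¹) • v, fun _ : Fin k => (k : ℝ)⁻¹)) '' Fsum ∧
    Set.BijOn (fun v : Fin n → ℝ => (((k : ℝ)⁻¹) • v, fun _ : Fin k => (k : ℝ)⁻¹))
      Fsum (C ∩ slice) := by
  have : Nonempty (Fin k) := ⟨⟨0, hk⟩⟩
  refine (and_iff_right_of_imp fun h => h.image_eq.symm).2 ?_
  simpa only [hC, hFsum, hslice, cayleyPolytope, Fintype.card_fin] using
    cayley_slice_general (𝕜 := ℝ) F
end

section
/- The set of tuples (a₁, a₂, a₃, a₄, a₅) ∈ ℝ⁵ for which there exists a linear map φ : ℝ³ → ℝ with φ(2,1,1) = a₁, φ(1,2,1) = a₂, φ(0,1,1) = a₃, φ(1,0,1) = a₅ (with a₄ unconstrained) is equal to the set of tuples (a₁, a₂, a₃, a₄, a₅) ∈ ℝ⁵ for which there exist linear maps φ₁, φ₂, φ₃ : ℝ³ → ℝ with φ₁(0,0,1) = a₄, φ₁(1,0,1) = a₅, φ₁(2,1,1) = a₁, φ₂(2,1,1) = a₁, φ₂(1,2,1) = a₂, φ₃(1,2,1) =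 a₂, φ₃(0,1,1) = a₃, φ₃(0,0,1) = a₄, and φ₁(1,1,1) = φ₂(1,1,1) = φ₃(1,1,1). -/
/-!
Let `vᵢ` be the ray over the vertex carrying the value `aᵢ`, and `o` the ray over the interior
lattice point. Both conditions say `a₁ + a₃ = a₂ + a₅`. For the quadrilateral this expresses the
only linear relation `v₁ + v₃ = v₂ + v₅` among its rays. In the subdivided pentagon the relations
`v₄ + v₁ = v₅ + o` and `v₂ + v₄ = v₃ + o` force the common value at `o` to be both `a₄ + a₁ - a₅`
and `a₂ + a₄ - a₃`, and the third cone imposes nothing, since `v₁`, `v₂`, `o` are linearly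
independent.
-/

open scoped Matrix in
theorem linearIndependent_of_tripleProduct_ne_zero {R : Type*} [CommRing R] [IsDomain R]
    {u v w : Fin 3 → R} (h : u ⬝ᵥ v ⨯₃ w ≠ 0) : LinearIndependent R ![u, v, w] :=
  Matrix.linearIndependent_rows_of_det_ne_zero (triple_product_eq_det u v w ▸ h)

section LinearExtension

variable {K V W : Type*} [DivisionRing K] [AddCommGroup V] [Module K V]
  [AddCommGroup W] [Module K W]

theorem exists_linearMap_apply_eq_of_linearIndependent {ι : Type*} {v : ι → V}
    (hv : LinearIndependent K v) (c : ι → W) : ∃ φ : V →ₗ[K] W, ∀ i, φ (v i) = c i := by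
  obtain ⟨g, hg⟩ := (Finsupp.linearCombination K v).exists_leftInverse_of_injective
    (LinearMap.ker_eq_bot.2 hv)
  have hgv (i : ι) : g (v i) = Finsupp.single i 1 := by
    simpa using LinearMap.congr_fun hg (Finsupp.single i 1)
  exact ⟨Finsupp.linearCombination K c ∘ₗ g, fun i => by simp [hgv]⟩

theorem exists_linearMap_parallelogram_iff {p q r s : V} (hpqr : LinearIndependent K ![p, q, r])
    (h : p + r = q + s) {a b c d : W} :
    (∃ φ : V →ₗ[K] W, φ p = a ∧ φ q = b ∧ φ r = c ∧ φ s = d) ↔ a + c = b + d := by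
  constructor
  · rintro ⟨φ, rfl, rfl, rfl, rfl⟩
    rw [← map_add, h, map_add]
  · intro habcd
    obtain ⟨φ, hφ⟩ := exists_linearMap_apply_eq_of_linearIndependent hpqr ![a, b, c]
    have hp : φ p = a := hφ 0
    have hq : φ q = b := hφ 1
    have hr : φ r = c := hφ 2
    refine ⟨φ, hp, hq, hr, ?_⟩
    rw [eq_sub_of_add_eq' h.symm, map_sub, map_add, hp, hq, hr, habcd, add_sub_cancel_left]

theorem exists_linearMap_subdivided_pentagon_iff {v₁ v₂ v₃ v₄ v₅ o : V}
    (h₁ : v₄ + v₁ = v₅ + o) (h₃ : v₂ + v₄ = v₃ + o)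
    (hσ₁ : LinearIndependent K ![v₄, v₅, v₁]) (hσ₂ : LinearIndependent K ![v₁, v₂, o])
    (hσ₃ : LinearIndependent K ![v₂, v₃, v₄]) {a₁ a₂ a₃ a₄ a₅ : W} :
    (∃ φ₁ φ₂ φ₃ : V →ₗ[K] W,
      φ₁ v₄ = a₄ ∧ φ₁ v₅ = a₅ ∧ φ₁ v₁ = a₁ ∧ φ₂ v₁ = a₁ ∧ φ₂ v₂ = a₂ ∧
      φ₃ v₂ = a₂ ∧ φ₃ v₃ = a₃ ∧ φ₃ v₄ = a₄ ∧ φ₁ o = φ₂ o ∧ φ₂ o = φ₃ o) ↔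
    a₁ + a₃ = a₂ + a₅ := by
  constructor
  · rintro ⟨φ₁, φ₂, φ₃, h₁₄, h₁₅, h₁₁, -, -, h₃₂, h₃₃, h₃₄, h₁₂, h₂₃⟩
    have e₁ : a₄ + a₁ = a₅ + φ₁ o :=
      (exists_linearMap_parallelogram_iff hσ₁ h₁).1 ⟨φ₁, h₁₄, h₁₅, h₁₁, rfl⟩
    have e₃ : a₂ + a₄ = a₃ + φ₁ o :=
      (exists_linearMap_parallelogram_iff hσ₃ h₃).1 ⟨φ₃, h₃₂, h₃₃, h₃₄, (h₁₂.trans h₂₃).symm⟩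
    linear_combination (norm := abel) e₁ - e₃
  · intro h
    obtain ⟨t, ht₁, ht₃⟩ : ∃ t : W, a₄ + a₁ = a₅ + t ∧ a₂ + a₄ = a₃ + t :=
      ⟨a₄ + a₁ - a₅, by abel, by linear_combination (norm := abel) -h⟩
    obtain ⟨φ₁, h₁₄, h₁₅, h₁₁, h₁ₒ⟩ := (exists_linearMap_parallelogram_iff hσ₁ h₁).2 ht₁
    obtain ⟨φ₂, hφ₂⟩ := exists_linearMap_apply_eq_of_linearIndependent hσ₂ ![a₁, a₂, t]
    obtain ⟨φ₃, h₃₂, h₃₃, h₃₄, h₃ₒ⟩ := (exists_linearMap_parallelogram_iff hσ₃ h₃).2 ht₃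
    have h₂ₒ : φ₂ o = t := hφ₂ 2
    exact ⟨φ₁, φ₂, φ₃, h₁₄, h₁₅, h₁₁, hφ₂ 0, hφ₂ 1, h₃₂, h₃₃, h₃₄,
      h₁ₒ.trans h₂ₒ.symm, h₂ₒ.trans h₃ₒ.symm⟩

theorem typeI_picard_groups_agree_general {v₁ v₂ v₃ v₄ v₅ o : V}
    (h₁ : v₄ + v₁ = v₅ + o) (h₃ : v₂ + v₄ = v₃ + o) (hQ : LinearIndependent K ![v₁, v₂, v₃])
    (hσ₁ : LinearIndependent K ![v₄, v₅, v₁]) (hσ₂ : LinearIndependent K ![v₁, v₂, o])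
    (hσ₃ : LinearIndependent K ![v₂, v₃, v₄]) :
    {a : W × W × W × W × W | ∃ φ : V →ₗ[K] W,
      φ v₁ = a.1 ∧ φ v₂ = a.2.1 ∧ φ v₃ = a.2.2.1 ∧ φ v₅ = a.2.2.2.2} =
    {a : W × W × W × W × W | ∃ φ₁ φ₂ φ₃ : V →ₗ[K] W,
      φ₁ v₄ = a.2.2.2.1 ∧ φ₁ v₅ = a.2.2.2.2 ∧ φ₁ v₁ = a.1 ∧
      φ₂ v₁ = a.1 ∧ φ₂ v₂ = a.2.1 ∧
      φ₃ v₂ = a.2.1 ∧ φ₃ v₃ = a.2.2.1 ∧ φ₃ v₄ = a.2.2.2.1 ∧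
      φ₁ o = φ₂ o ∧ φ₂ o = φ₃ o} := by
  have hQuad : v₁ + v₃ = v₂ + v₅ := by linear_combination (norm := abel) h₁ - h₃
  ext a
  exact (exists_linearMap_parallelogram_iff hQ hQuad).trans
    (exists_linearMap_subdivided_pentagon_iff h₁ h₃ hσ₁ hσ₂ hσ₃).symm

end LinearExtension

/-- The subset of `ℝ⁵` of tuples extending to a linear function on the cone over the
quadrilateral (the `Y₁` condition; `a₄` unconstrained) equals the subset of tuples
extending to the three cones of the subdivided pentagon with agreement along the
interior ray (the `Y₂` condition): `Pic(Y₁) = Pic(Y₂)` inside `Pic(Z⁰)`. -/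
theorem typeI_picard_groups_agree :
    {a : ℝ × ℝ × ℝ × ℝ × ℝ | ∃ φ : (Fin 3 → ℝ) →ₗ[ℝ] ℝ,
      φ ![2, 1, 1] = a.1 ∧ φ ![1, 2, 1] = a.2.1 ∧ φ ![0, 1, 1] = a.2.2.1 ∧
      φ ![1, 0, 1] = a.2.2.2.2} =
    {a : ℝ × ℝ × ℝ × ℝ × ℝ | ∃ φ₁ φ₂ φ₃ : (Fin 3 → ℝ) →ₗ[ℝ] ℝ,
      φ₁ ![0, 0, 1] = a.2.2.2.1 ∧ φ₁ ![1, 0, 1] = a.2.2.2.2 ∧ φ₁ ![2, 1, 1] = a.1 ∧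
      φ₂ ![2, 1, 1] = a.1 ∧ φ₂ ![1, 2, 1] = a.2.1 ∧
      φ₃ ![1, 2, 1] = a.2.1 ∧ φ₃ ![0, 1, 1] = a.2.2.1 ∧ φ₃ ![0, 0, 1] = a.2.2.2.1 ∧
      φ₁ ![1, 1, 1] = φ₂ ![1, 1, 1] ∧ φ₂ ![1, 1, 1] = φ₃ ![1, 1, 1]} := by
  apply typeI_picard_groups_agree_general
  case h₁ | h₃ => norm_num
  all_goals
    exact linearIndependent_of_tripleProduct_ne_zero
      (by norm_num [cross_apply, Matrix.cons_val_two])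
end

section
/- Let P be the convex hull in ℝ³ of the seven points (0,0,1), (0,1,−1), (1,1,−1), (1,0,−1), (0,−1,−1), (−1,−1,−1), (−1,0,−1). Then 0 lies in the interior of P, and the dual polytope P* = {x ∈ ℝ³ : ⟨x, y⟩ ≥ −1 for all y ∈ P} satisfies P* = convexHull(P* ∩ ℤ³); that is, P is a reflexive polytope. -/
open Matrix

/-!
Testing a linear inequality on `P` amounts to testing it on the seven vertices, so the dual is cut
out by `-1 ≤ c` and `|a|, |b|, |a + b| ≤ 1 - c` in coordinates `(a, b, c)`. This is a pyramid over a
hexagon whose vertices are lattice points: seen from the centre `(0, 0, -1)` of the base, the base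
has vertices `±u`, `±v`, `±(u - v)` with `u = (2, 0, 0)` and `v = (0, 2, 0)`. The three lines
through opposite vertices cut the hexagon into triangles spanned by the centre and two neighbouring
vertices, and so the pyramid into simplices in which the barycentric coordinates are explicit.

The origin is interior to `P` because it is a convex combination with positive weights of vertices
spanning the space.
-/

lemma convexHull_inter_eq_of_subset {𝕜 E : Type*} [Semiring 𝕜] [PartialOrder 𝕜] [AddCommMonoid E]
    [Module 𝕜 E] {s t : Set E} (hst : s ⊆ t) :
    convexHull 𝕜 (convexHull 𝕜 s ∩ t) = convexHull 𝕜 s :=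
  (convexHull_min Set.inter_subset_left (convex_convexHull 𝕜 s)).antisymm
    (convexHull_mono (Set.subset_inter (subset_convexHull 𝕜 s) hst))

section Convex

variable {𝕜 E : Type*} [Field 𝕜] [LinearOrder 𝕜] [IsStrictOrderedRing 𝕜]
  [AddCommGroup E] [Module 𝕜 E]

lemma sum_smul_mem_of_convex_of_zero_mem {ι : Type*} [Fintype ι] {s : Set E} (hs : Convex 𝕜 s)
    (zero_mem : 0 ∈ s) {w : ι → 𝕜} {v : ι → E} (hw : ∀ i, 0 ≤ w i) (hw_sum : ∑ i, w i ≤ 1)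
    (hv : ∀ i, v i ∈ s) : ∑ i, w i • v i ∈ s := by
  let w' : Option ι → 𝕜 := fun o => o.elim (1 - ∑ i, w i) w
  let v' : Option ι → E := fun o => o.elim 0 v
  have hw' : ∀ o, 0 ≤ w' o := Option.rec (sub_nonneg.2 hw_sum) hw
  have hv' : ∀ o, v' o ∈ s := Option.rec zero_mem hv
  have hw'_sum : ∑ o, w' o = 1 := by simp [w', Fintype.sum_option]
  simpa [w', v', Fintype.sum_option] using
    hs.sum_mem (fun o _ => hw' o) hw'_sum (fun o _ => hv' o)

lemma smul_add_smul_add_smul_mem_of_convex_of_zero_mem {s : Set E} (hs : Convex 𝕜 s)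
    (zero_mem : 0 ∈ s) {x y z : E} (hx : x ∈ s) (hy : y ∈ s) (hz : z ∈ s) {a b c : 𝕜}
    (ha : 0 ≤ a) (hb : 0 ≤ b) (hc : 0 ≤ c) (habc : a + b + c ≤ 1) :
    a • x + b • y + c • z ∈ s := by
  have hsum : ∑ i, ![a, b, c] i • ![x, y, z] i ∈ s :=
    sum_smul_mem_of_convex_of_zero_mem hs zero_mem (by simp [Fin.forall_fin_succ, *])
      (by simpa [Fin.sum_univ_three]) (by simp [Fin.forall_fin_succ, *])
  simpa [Fin.sum_univ_three] using hsum

lemma smul_add_smul_add_smul_mem_of_convex_of_hexagon {s : Set E} (hs : Convex 𝕜 s) {p u v : E}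
    (hp : p ∈ s) (hu : u ∈ s) (hu' : -u ∈ s) (hv : v ∈ s) (hv' : -v ∈ s) (huv : u - v ∈ s)
    (hvu : v - u ∈ s) {r a b : 𝕜} (hr : 0 ≤ r) (ha : |a| ≤ 1 - r) (hb : |b| ≤ 1 - r)
    (hab : |a + b| ≤ 1 - r) : r • p + a • u + b • v ∈ s := by
  have zero_mem : 0 ∈ s := by simpa using hs.midpoint_mem hu hu'
  have mem_simplex {x y : E} (hx : x ∈ s) (hy : y ∈ s) {c d : 𝕜} (hc : 0 ≤ c) (hd : 0 ≤ d)
      (hcd : c + d ≤ 1 - r) : r • p + c • x + d • y ∈ s :=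
    smul_add_smul_add_smul_mem_of_convex_of_zero_mem hs zero_mem hp hx hy hr hc hd (by linarith)
  rw [abs_le] at ha hb hab
  rcases le_total 0 a with ha₀ | ha₀ <;> rcases le_total 0 b with hb₀ | hb₀
  · exact mem_simplex hu hv ha₀ hb₀ hab.2
  · rcases le_total 0 (a + b) with hab₀ | hab₀
    · convert mem_simplex hu huv hab₀ (neg_nonneg.2 hb₀) (by linarith) using 1
      module
    · convert mem_simplex hv' huv (neg_nonneg.2 hab₀) ha₀ (by linarith) using 1
      module
  · rcases le_total 0 (a + b) with hab₀ | hab₀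
    · convert mem_simplex hv hvu hab₀ (neg_nonneg.2 ha₀) (by linarith) using 1
      module
    · convert mem_simplex hu' hvu (neg_nonneg.2 hab₀) hb₀ (by linarith) using 1
      module
  · convert mem_simplex hu' hv' (neg_nonneg.2 ha₀) (neg_nonneg.2 hb₀) (by linarith) using 1
    module

end Convex

-- Since `0 ∈ s`, weights of sum less than `1` are allowed as well. Positive such weights form an
-- open set, which the surjective linear map `c ↦ ∑ i, c i • v i` sends to a neighbourhood of `0`.
lemma zero_mem_interior_of_convex_of_sum_smul_eq_zero {ι E : Type*} [Fintype ι] [AddCommGroup E]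
    [Module ℝ E] [TopologicalSpace E] [IsTopologicalAddGroup E] [ContinuousSMul ℝ E] [T2Space E]
    [FiniteDimensional ℝ E] {s : Set E} (hs : Convex ℝ s) {v : ι → E} (hv : ∀ i, v i ∈ s)
    (hspan : ⊤ ≤ Submodule.span ℝ (Set.range v)) {w : ι → ℝ} (hw : ∀ i, 0 < w i)
    (hw_sum : ∑ i, w i = 1) (hwv : ∑ i, w i • v i = 0) : 0 ∈ interior s := by
  have zero_mem : 0 ∈ s :=
    hwv ▸ hs.sum_mem (fun i _ => (hw i).le) hw_sum (fun i _ => hv i)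
  let f : (ι → ℝ) →ₗ[ℝ] E := Fintype.linearCombination ℝ v
  have f_surjective : Function.Surjective f := by
    rwa [← LinearMap.range_eq_top, Fintype.range_linearCombination, ← top_le_iff]
  let U : Set (ι → ℝ) := Set.univ.pi (fun _ => Set.Ioi 0) ∩ {c | ∑ i, c i < 1}
  have isOpen_U : IsOpen U :=
    (isOpen_set_pi Set.finite_univ fun _ _ => isOpen_Ioi).inter
      (isOpen_lt (by fun_prop) continuous_const)
  have image_subset : f '' U ⊆ s := by
    rintro _ ⟨c, ⟨hc, hc_sum⟩, rfl⟩
    exact sum_smul_mem_of_convex_of_zero_mem hs zero_mem (fun i => (hc i trivial).le) hc_sum.le hv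
  have half_mem : (2⁻¹ : ℝ) • w ∈ U := by
    refine ⟨fun i _ => by simpa using hw i, ?_⟩
    simp only [Set.mem_ofPred_eq, Pi.smul_apply, ← Finset.smul_sum, hw_sum]
    norm_num
  have f_half : f ((2⁻¹ : ℝ) • w) = 0 := by
    simp [f, Fintype.linearCombination_apply, map_smul, hwv]
  exact interior_maximal image_subset (f.isOpenMap_of_finiteDimensional f_surjective U isOpen_U)
    ⟨_, half_mem, f_half⟩

section DualPolytope

variable {𝕜 ι : Type*} [CommRing 𝕜] [PartialOrder 𝕜] [IsOrderedRing 𝕜] [Fintype ι]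

/-- The dual `P* = {x | ⟨x, y⟩ ≥ -1 for all y ∈ P}` of a set `P` of coordinate vectors, in the sign
convention used for reflexive polytopes. -/
def dualPolytope (P : Set (ι → 𝕜)) : Set (ι → 𝕜) := {x | ∀ y ∈ P, x ⬝ᵥ y ≥ -1}

lemma convex_dualPolytope (P : Set (ι → 𝕜)) : Convex 𝕜 (dualPolytope P) := by
  simp only [dualPolytope, Set.ofPred_forall]
  exact convex_iInter₂ fun y _ =>
    convex_halfSpace_ge ⟨fun a b => add_dotProduct a b y, fun r a => smul_dotProduct r a y⟩ (-1)

lemma dualPolytope_convexHull (V : Set (ι → 𝕜)) :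
    dualPolytope (convexHull 𝕜 V) = dualPolytope V := by
  refine Set.Subset.antisymm (fun x hx y hy => hx y (subset_convexHull 𝕜 V hy)) fun x hx => ?_
  exact convexHull_min hx <|
    convex_halfSpace_ge ⟨dotProduct_add x, fun r y => dotProduct_smul r x y⟩ (-1)

end DualPolytope

/-- The vertices of the polytope `P` of `polytope122_reflexive`. -/
def vertices122 : Set (Fin 3 → ℝ) :=
  {![0, 0, 1], ![0, 1, -1], ![1, 1, -1], ![1, 0, -1], ![0, -1, -1], ![-1, -1, -1], ![-1, 0, -1]}

/-- The vertices of the dual of the polytope spanned by `vertices122`: the apex of a pyramid,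
followed by three pairs of opposite vertices of its hexagonal base. -/
def dualVertices122 : Set (Fin 3 → ℝ) :=
  {![0, 0, 1], ![2, 0, -1], ![-2, 0, -1], ![0, 2, -1], ![0, -2, -1], ![2, -2, -1], ![-2, 2, -1]}

lemma zero_mem_interior_convexHull_vertices122 : 0 ∈ interior (convexHull ℝ vertices122) := by
  let v : Fin 4 → Fin 3 → ℝ := ![![0, 0, 1], ![0, 1, -1], ![1, 0, -1], ![-1, -1, -1]]
  have hv (i : Fin 4) : v i ∈ convexHull ℝ vertices122 :=
    subset_convexHull ℝ _ (by fin_cases i <;> simp [v, vertices122])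
  have hspan : ⊤ ≤ Submodule.span ℝ (Set.range v) := fun x _ => by
    rw [← Fintype.range_linearCombination]
    refine ⟨![x 2 + x 0 + x 1, x 1, x 0, 0], ?_⟩
    ext j
    fin_cases j <;> simp [v, Fintype.linearCombination_apply, Fin.sum_univ_four]
  refine zero_mem_interior_of_convex_of_sum_smul_eq_zero (convex_convexHull ℝ _) hv hspan
    (w := ![1 / 2, 1 / 6, 1 / 6, 1 / 6]) ?_ ?_ ?_
  · simp [Fin.forall_fin_succ]
  · norm_num [Fin.sum_univ_succ]
  · ext j
    fin_cases j <;> norm_num [v, Fin.sum_univ_succ]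

lemma mem_dualPolytope_vertices122 {x : Fin 3 → ℝ} :
    x ∈ dualPolytope vertices122 ↔
      -1 ≤ x 2 ∧ |x 0| ≤ 1 - x 2 ∧ |x 1| ≤ 1 - x 2 ∧ |x 0 + x 1| ≤ 1 - x 2 := by
  simp only [dualPolytope, vertices122, Set.mem_ofPred_eq, Set.forall_mem_insert,
    Set.mem_singleton_iff, forall_eq, dotProduct, Fin.sum_univ_three, abs_le, cons_val]
  grind

lemma mem_convexHull_dualVertices122 {x : Fin 3 → ℝ} (hc : -1 ≤ x 2) (ha : |x 0| ≤ 1 - x 2)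
    (hb : |x 1| ≤ 1 - x 2) (hab : |x 0 + x 1| ≤ 1 - x 2) : x ∈ convexHull ℝ dualVertices122 := by
  let s : Set (Fin 3 → ℝ) := (fun y => ![0, 0, -1] + y) ⁻¹' convexHull ℝ dualVertices122
  have hs : Convex ℝ s := (convex_convexHull ℝ _).translate_preimage_right _
  have mem_s {y : Fin 3 → ℝ} (hy : ![0, 0, -1] + y ∈ dualVertices122) : y ∈ s :=
    subset_convexHull ℝ _ hy
  have mem_pyramid : ((1 + x 2) / 2) • ![0, 0, 2] + (x 0 / 2) • ![2, 0, 0] +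
      (x 1 / 2) • ![0, 2, 0] ∈ s := by
    rw [abs_le] at ha hb hab
    apply smul_add_smul_add_smul_mem_of_convex_of_hexagon hs
    iterate 7 exact mem_s (by norm_num [dualVertices122])
    · linarith
    all_goals exact abs_le.2 ⟨by linarith, by linarith⟩
  have x_eq : x = ![0, 0, -1] + (((1 + x 2) / 2) • ![0, 0, 2] + (x 0 / 2) • ![2, 0, 0] +
      (x 1 / 2) • ![0, 2, 0]) := by
    ext j
    fin_cases j <;> simp
  rw [x_eq]
  exact mem_pyramid

lemma dualPolytope_vertices122 : dualPolytope vertices122 = convexHull ℝ dualVertices122 := by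
  refine Set.Subset.antisymm (fun x hx => ?_) (convexHull_min ?_ (convex_dualPolytope _))
  · obtain ⟨hc, ha, hb, hab⟩ := mem_dualPolytope_vertices122.1 hx
    exact mem_convexHull_dualVertices122 hc ha hb hab
  · simp only [dualVertices122, Set.insert_subset_iff, Set.singleton_subset_iff,
      mem_dualPolytope_vertices122, cons_val]
    norm_num

lemma dualVertices122_subset_lattice :
    dualVertices122 ⊆ {x : Fin 3 → ℝ | ∀ i, ∃ m : ℤ, x i = (m : ℝ)} := by
  refine fun x hx i => ⟨⌊x i⌋, ?_⟩
  rcases hx with rfl | rfl | rfl | rfl | rfl | rfl | rfl <;> fin_cases i <;> norm_num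

/-- The polytope with vertices `(0,0,1)`, `(0,1,−1)`, `(1,1,−1)`, `(1,0,−1)`,
`(0,−1,−1)`, `(−1,−1,−1)`, `(−1,0,−1)` contains the origin in its interior and is
reflexive: its dual equals the convex hull of the dual's lattice points. -/
theorem polytope122_reflexive
    (P : Set (Fin 3 → ℝ))
    (hP : P = convexHull ℝ
      ({![0, 0, 1], ![0, 1, -1], ![1, 1, -1], ![1, 0, -1],
        ![0, -1, -1], ![-1, -1, -1], ![-1, 0, -1]} : Set (Fin 3 → ℝ)))
    (Pd : Set (Fin 3 → ℝ))
    (hPd : Pd = {x : Fin 3 → ℝ | ∀ y ∈ P, x ⬝ᵥ y ≥ -1}) :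
    0 ∈ interior P ∧
      Pd = convexHull ℝ (Pd ∩ {x : Fin 3 → ℝ | ∀ i, ∃ m : ℤ, x i = (m : ℝ)}) := by
  change P = convexHull ℝ vertices122 at hP
  change Pd = dualPolytope P at hPd
  have Pd_eq : Pd = convexHull ℝ dualVertices122 := by
    rw [hPd, hP, dualPolytope_convexHull, dualPolytope_vertices122]
  rw [hP, Pd_eq]
  exact ⟨zero_mem_interior_convexHull_vertices122,
    (convexHull_inter_eq_of_subset dualVertices122_subset_lattice).symm⟩
end
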